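/- arXiv:2510.00526 — 5 statements merged into one kernel-verified Lean document; each statement's English description precedes it below -/
import Mathlib

section
/- Let f : [0,1] → ℝ be twice continuously differentiable with f′(p) < 0 for all p ∈ (0,1), and suppose f is concave (f″ ≤ 0 on [0,1]). Then every global maximizer of W_f on [0,1] lies in the interval [1/2, 1]. -/
/-- The gradient weight `W_f(p) = -f'(p) * p * (1 - p)`. -/
def Wf (f' : ℝ → ℝ) (p : ℝ) : ℝ := -f' p * p * (1 - p)

/-- Concave case of the "Convex versus Concave Objectives" proposition:
if `f ∈ C²[0,1]` with `f' < 0` on `(0,1)` and `f'' ≤ 0` on `[0,1]`, then any global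
maximizer of `W_f` on `[0,1]` lies in `[1/2, 1]`. -/
theorem concave_maximizer_right (f f' f'' : ℝ → ℝ)
    (hf1 : ∀ p ∈ Set.Icc (0:ℝ) 1, HasDerivAt f (f' p) p)
    (hf2 : ∀ p ∈ Set.Icc (0:ℝ) 1, HasDerivAt f' (f'' p) p)
    (hcont : ContinuousOn f'' (Set.Icc (0:ℝ) 1))
    (hneg : ∀ p ∈ Set.Ioo (0:ℝ) 1, f' p < 0)
    (hconc : ∀ p ∈ Set.Icc (0:ℝ) 1, f'' p ≤ 0)
    (p₀ : ℝ) (hp₀ : p₀ ∈ Set.Icc (0:ℝ) 1)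
    (hmax : ∀ p ∈ Set.Icc (0:ℝ) 1, Wf f' p ≤ Wf f' p₀) :
    p₀ ∈ Set.Icc (1/2 : ℝ) 1 := by
  have hanti : AntitoneOn f' (Set.Icc (0:ℝ) 1) := by
    refine antitoneOn_of_hasDerivWithinAt_nonpos (convex_Icc 0 1)
      (fun x hx => (hf2 x hx).continuousAt.continuousWithinAt)
      (fun x hx => (hf2 x (interior_subset hx)).hasDerivWithinAt)
      (fun x hx => hconc x (interior_subset hx))
  refine ⟨?_, hp₀.2⟩
  by_contra! hlt
  -- To the left of `1/2` both factors `-f' p` and `p * (1 - p)` are dominated by their values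
  -- at `1/2`, the second one strictly, so `p₀` would lose to `1/2`.
  have hhalf : (1/2 : ℝ) ∈ Set.Icc (0:ℝ) 1 := by norm_num
  have hslope : f' (1/2) ≤ f' p₀ := hanti hp₀ hhalf hlt.le
  have hpos : f' (1/2) < 0 := hneg _ (by norm_num)
  have hW := hmax _ hhalf
  unfold Wf at hW
  have hq : 0 ≤ p₀ * (1 - p₀) := mul_nonneg hp₀.1 (by linarith)
  have hq' : p₀ * (1 - p₀) < 1/4 := by nlinarith [mul_pos (sub_pos.2 hlt) (sub_pos.2 hlt)]
  have h1 := mul_le_mul_of_nonneg_right hslope hq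
  have h2 := mul_lt_mul_of_neg_left hq' hpos
  linarith
end

section
/- Let f : [0,1] → ℝ be twice continuously differentiable with f′(p) < 0 for all p ∈ (0,1), and suppose f is convex (f″ ≥ 0 on [0,1]). Then every global maximizer of W_f on [0,1] lies in the interval [0, 1/2]. -/
/-- Convex case of the "Convex versus Concave Objectives" proposition:
if `f ∈ C²[0,1]` with `f' < 0` on `(0,1)` and `f'' ≥ 0` on `[0,1]`, then any global
maximizer of `W_f` on `[0,1]` lies in `[0, 1/2]`. -/
theorem convex_maximizer_left (f f' f'' : ℝ → ℝ)
    (hf1 : ∀ p ∈ Set.Icc (0:ℝ) 1, HasDerivAt f (f' p) p)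
    (hf2 : ∀ p ∈ Set.Icc (0:ℝ) 1, HasDerivAt f' (f'' p) p)
    (hcont : ContinuousOn f'' (Set.Icc (0:ℝ) 1))
    (hneg : ∀ p ∈ Set.Ioo (0:ℝ) 1, f' p < 0)
    (hconv : ∀ p ∈ Set.Icc (0:ℝ) 1, 0 ≤ f'' p)
    (p₀ : ℝ) (hp₀ : p₀ ∈ Set.Icc (0:ℝ) 1)
    (hmax : ∀ p ∈ Set.Icc (0:ℝ) 1, Wf f' p ≤ Wf f' p₀) :
    p₀ ∈ Set.Icc (0 : ℝ) (1/2) := by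
  have hmono : MonotoneOn f' (Set.Icc (0:ℝ) 1) := by
    refine monotoneOn_of_deriv_nonneg (convex_Icc 0 1)
      (fun p hp => (hf2 p hp).continuousAt.continuousWithinAt)
      (fun p hp => (hf2 p (interior_subset hp)).differentiableAt.differentiableWithinAt)
      (fun p hp => ?_)
    rw [(hf2 p (interior_subset hp)).deriv]
    exact hconv p (interior_subset hp)
  refine ⟨hp₀.1, ?_⟩
  by_contra! hlt
  have hhalf : (1/2 : ℝ) ∈ Set.Icc (0:ℝ) 1 := by constructor <;> norm_num
  have hle : f' (1/2) ≤ f' p₀ := hmono hhalf hp₀ hlt.le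
  have hneg_half : f' (1/2) < 0 := hneg _ (by constructor <;> norm_num)
  -- `W_f(p₀) ≤ -f'(1/2) p₀ (1 - p₀) < -f'(1/2) / 4 = W_f(1/2)` contradicts maximality.
  have hW := hmax _ hhalf
  unfold Wf at hW
  have hprod : 0 ≤ p₀ * (1 - p₀) := mul_nonneg hp₀.1 (by linarith [hp₀.2])
  have hbound := mul_le_mul_of_nonneg_right hle hprod
  have hsq : 0 < (p₀ - 1/2) * (p₀ - 1/2) := mul_pos (by linarith) (by linarith)
  have hstrict := mul_pos_of_neg_of_neg hneg_half (neg_lt_zero.mpr hsq)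
  linarith
end

section
/- Let q ∈ ℝ^V be a probability vector and let i ≠ j be two distinct indices in {1,…,V}. Define F(q) = q_i · q_j · (−q_i − q_j + ‖q‖²). Then F(q) ≤ (11√33 − 59)/768, and moreover (11√33 − 59)/768 ≤ 0.00546. -/
/-!
Write `a = q i`, `b = q j`, `s = a + b`, `p = a * b`. The remaining entries are nonnegative with
sum `1 - s`, so their squares sum to at most `(1 - s) ^ 2`, and the quantity is at most
`p * ((1 - s) * (1 - 2 * s) - 2 * p)`, where `p ≤ s ^ 2 / 4`.

For `s ≤ 3 / 8` this is increasing in `p` on the admissible range, so with `x = s / 2` it is at most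
`x ^ 2 * (1 - 6 * x + 6 * x ^ 2)`. This quartic has its maximum over `[0, 3 / 16]` at the root
`r = (9 - √33) / 24` of `12 * r ^ 2 - 9 * r + 1`, where its value is `(11 * √33 - 59) / 768`; the
difference from the maximum is `(x - r) ^ 2` times a nonnegative quadratic. For `s ≥ 3 / 8` one has
`(1 - s) * (1 - 2 * s) ≤ 5 / 32`, and `p * (5 / 32 - 2 * p)` never exceeds `(5 / 32) ^ 2 / 8`, which
is well below the maximum.
-/

theorem sum_sq_le_of_two {V : ℕ} (q : Fin V → ℝ)
    (hq0 : ∀ m, 0 ≤ q m) (hq1 : ∑ m, q m = 1) (i j : Fin V) (hij : i ≠ j) :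
    q i + q j ≤ 1 ∧
    ∑ k, (q k) ^ 2 ≤ q i ^ 2 + q j ^ 2 + (1 - q i - q j) ^ 2 := by
  have hj : j ∈ Finset.univ.erase i := Finset.mem_erase.mpr ⟨hij.symm, Finset.mem_univ j⟩
  have split : ∀ f : Fin V → ℝ,
      ∑ k, f k = f i + (f j + ∑ k ∈ (Finset.univ.erase i).erase j, f k) := fun f => by
    rw [Finset.add_sum_erase _ f hj, Finset.add_sum_erase _ f (Finset.mem_univ i)]
  have h1 := split q
  have h2 := split (fun k => q k ^ 2)
  have h0 : 0 ≤ ∑ k ∈ (Finset.univ.erase i).erase j, q k :=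
    Finset.sum_nonneg fun k _ => hq0 k
  have h3 : ∑ k ∈ (Finset.univ.erase i).erase j, q k ^ 2
      ≤ (∑ k ∈ (Finset.univ.erase i).erase j, q k) ^ 2 :=
    Finset.sum_sq_le_sq_sum_of_nonneg fun k _ => hq0 k
  have h4 : ∑ k ∈ (Finset.univ.erase i).erase j, q k = 1 - q i - q j := by linarith
  rw [h4] at h0 h3
  exact ⟨by linarith, by linarith⟩

/-- The one-variable bound: the maximum is attained at `x = (9 - √33) / 24`. -/
theorem quartic_le {x : ℝ} (hx0 : 0 ≤ x) (hx1 : x ≤ 3 / 16) :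
    x ^ 2 * (1 - 6 * x + 6 * x ^ 2) ≤ (11 * Real.sqrt 33 - 59) / 768 := by
  have hw : Real.sqrt 33 ^ 2 = 33 := Real.sq_sqrt (by norm_num)
  have hl : 5 ≤ Real.sqrt 33 := Real.le_sqrt_of_sq_le (by norm_num)
  have hu : Real.sqrt 33 ≤ 6 := Real.sqrt_le_iff.mpr ⟨by norm_num, by norm_num⟩
  obtain ⟨r, hr⟩ : ∃ r, r = (9 - Real.sqrt 33) / 24 := ⟨_, rfl⟩
  have hs : Real.sqrt 33 = 9 - 24 * r := by linarith
  rw [hs] at hw hl hu ⊢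
  have hr2 : r ^ 2 = (9 * r - 1) / 12 := by linarith
  have hr3 : r ^ 3 = (9 * r ^ 2 - r) / 12 := by linear_combination r * hr2
  have hr4 : r ^ 4 = (9 * r ^ 3 - r ^ 2) / 12 := by linear_combination r ^ 2 * hr2
  have hq : 0 ≤ x * (6 - 12 * r - 6 * x) + r * (3 - 6 * r) :=
    add_nonneg (mul_nonneg hx0 (by linarith)) (mul_nonneg (by linarith) (by linarith))
  have key := mul_nonneg (sq_nonneg (x - r)) hq
  -- expanding, `key` says `x ^ 2 * (1 - 6 * x + 6 * x ^ 2) ≤ r ^ 2 * (3 * r - 6 * r ^ 2)`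
  -- up to the quadratic relation satisfied by `r`
  have hc : (x - r) ^ 2 * (x * (6 - 12 * r - 6 * x) + r * (3 - 6 * r))
      = (11 * (9 - 24 * r) - 59) / 768 - x ^ 2 * (1 - 6 * x + 6 * x ^ 2) := by
    have e : (x - r) ^ 2 * (x * (6 - 12 * r - 6 * x) + r * (3 - 6 * r))
      = -6 * x ^ 4 + 6 * x ^ 3 + (12 * r ^ 2 - 9 * r) * x ^ 2 + (3 * r ^ 3 - 6 * r ^ 4) := by
      ring
    have e1 : 12 * r ^ 2 - 9 * r = -1 := by linarith
    have e2 : 3 * r ^ 3 - 6 * r ^ 4 = (11 * (9 - 24 * r) - 59) / 768 := by linarith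
    rw [e, e1, e2]
    ring
  linarith

theorem two_variable_le {a b : ℝ} (ha : 0 ≤ a) (hb : 0 ≤ b) (hab : a + b ≤ 1) :
    a * b * (-a - b + (a ^ 2 + b ^ 2 + (1 - a - b) ^ 2)) ≤ (11 * Real.sqrt 33 - 59) / 768 := by
  obtain ⟨s, hs⟩ : ∃ s, s = a + b := ⟨_, rfl⟩
  obtain ⟨p, hp⟩ : ∃ p, p = a * b := ⟨_, rfl⟩
  have hp0 : 0 ≤ p := hp ▸ mul_nonneg ha hb
  have hps : p ≤ s ^ 2 / 4 := by
    rw [hp, hs]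
    linarith [sq_nonneg (a - b)]
  have e : a * b * (-a - b + (a ^ 2 + b ^ 2 + (1 - a - b) ^ 2))
      = p * ((1 - s) * (1 - 2 * s) - 2 * p) := by
    rw [hp, hs]
    ring
  rw [e]
  rcases le_total s (3 / 8) with h | h
  · have hg := quartic_le (x := s / 2) (by linarith) (by linarith)
    -- the slope in `p` between `p` and `s ^ 2 / 4` is `(1 - s) * (1 - 2 * s) - 2 * (p + s ^ 2 / 4)`
    have hm : 0 ≤ (s ^ 2 / 4 - p) * ((1 - s) * (1 - 2 * s) - 2 * (p + s ^ 2 / 4)) :=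
      mul_nonneg (by linarith) (by nlinarith)
    nlinarith
  · have hl : 5.7 ≤ Real.sqrt 33 := Real.le_sqrt_of_sq_le (by norm_num)
    have hc : (1 - s) * (1 - 2 * s) ≤ 5 / 32 := by nlinarith
    have hm := mul_le_mul_of_nonneg_left hc hp0
    nlinarith [sq_nonneg (p - 5 / 128)]

/-- Part (2) of the "Useful Inequalities" lemma (upper bound): for a probability
vector `q` and distinct indices `i ≠ j`,
`F(q) = q_i q_j (-q_i - q_j + ‖q‖²) ≤ (11√33 - 59)/768 ≤ 0.00546`. -/
theorem useful_ineq_two {V : ℕ} (q : Fin V → ℝ)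
    (hq0 : ∀ m, 0 ≤ q m) (hq1 : ∑ m, q m = 1) (i j : Fin V) (hij : i ≠ j) :
    q i * q j * (-(q i) - q j + ∑ k, (q k) ^ 2) ≤ (11 * Real.sqrt 33 - 59) / 768 ∧
    (11 * Real.sqrt 33 - 59) / 768 ≤ 0.00546 := by
  obtain ⟨h1, h2⟩ := sum_sq_le_of_two q hq0 hq1 i j hij
  refine ⟨?_, ?_⟩
  · refine le_trans ?_ (two_variable_le (hq0 i) (hq0 j) h1)
    exact mul_le_mul_of_nonneg_left (by linarith) (mul_nonneg (hq0 i) (hq0 j))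
  · have hu : Real.sqrt 33 ≤ 5.7447 := Real.sqrt_le_iff.mpr ⟨by norm_num, by norm_num⟩
    linarith
end

section
/- Let V ≥ 3 and let i ≠ j be distinct indices in {1,…,V}. Set x* = (9 − √33)/24 and define q ∈ ℝ^V by q_i = q_j = x*, q_ℓ = 1 − 2x* for one fixed index ℓ ∉ {i, j}, and q_m = 0 for all other m. Then q is a probability vector and q_i · q_j · (−q_i − q_j + ‖q‖²) = (11√33 − 59)/768; hence the bound F(q) ≤ (11√33 − 59)/768 over the probability simplex is attained. -/
/-!
The support of `q` is `{i, j, ℓ}`, so both sums have three terms. With `x = (9 - √33) / 24`, the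
objective is `x² (6 x² - 6 x + 1)`, and reducing this polynomial in `√33` by `√33 ^ 2 = 33` gives
the stated value; nonnegativity amounts to `0 ≤ √33 ≤ 9`.
-/

/-- A function on `Fin V` vanishing off three distinct points sums to its values there. -/
theorem sum_eq_of_three {V : ℕ} {i j ℓ : Fin V} (hij : i ≠ j) (hℓi : ℓ ≠ i) (hℓj : ℓ ≠ j)
    (f : Fin V → ℝ) (hf : ∀ m, m ≠ i → m ≠ j → m ≠ ℓ → f m = 0) :
    ∑ m, f m = f i + f j + f ℓ := by
  have h : ∑ m ∈ ({i, j, ℓ} : Finset (Fin V)), f m = ∑ m, f m := by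
    refine Finset.sum_subset (Finset.subset_univ _) fun m _ hm => ?_
    simp only [Finset.mem_insert, Finset.mem_singleton, not_or] at hm
    exact hf m hm.1 hm.2.1 hm.2.2
  rw [← h, Finset.sum_insert (by simp [hij, hℓi.symm]), Finset.sum_insert (by simp [hℓj.symm]),
    Finset.sum_singleton, add_assoc]

/-- Attainment in part (2) of the "Useful Inequalities" lemma: with
`x* = (9 - √33)/24`, the vector with `q_i = q_j = x*`, all remaining mass
`1 - 2x*` on a single coordinate `ℓ ∉ {i, j}`, and zero elsewhere, is a
probability vector achieving `F(q) = (11√33 - 59)/768`. -/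
theorem useful_ineq_two_attained {V : ℕ} (hV : 3 ≤ V) (i j ℓ : Fin V)
    (hij : i ≠ j) (hℓi : ℓ ≠ i) (hℓj : ℓ ≠ j) (q : Fin V → ℝ)
    (hqi : q i = (9 - Real.sqrt 33) / 24)
    (hqj : q j = (9 - Real.sqrt 33) / 24)
    (hqℓ : q ℓ = 1 - 2 * ((9 - Real.sqrt 33) / 24))
    (hrest : ∀ m, m ≠ i → m ≠ j → m ≠ ℓ → q m = 0) :
    (∀ m, 0 ≤ q m) ∧ (∑ m, q m = 1) ∧
    q i * q j * (-(q i) - q j + ∑ k, (q k) ^ 2) = (11 * Real.sqrt 33 - 59) / 768 := by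
  have hs : Real.sqrt 33 ^ 2 = 33 := Real.sq_sqrt (by norm_num)
  have hs0 : 0 ≤ Real.sqrt 33 := Real.sqrt_nonneg 33
  have hs9 : Real.sqrt 33 ≤ 9 := by nlinarith
  refine ⟨fun m => ?_, ?_, ?_⟩
  · by_cases hi : m = i
    · rw [hi, hqi]; linarith
    by_cases hj : m = j
    · rw [hj, hqj]; linarith
    by_cases hl : m = ℓ
    · rw [hl, hqℓ]; linarith
    exact (hrest m hi hj hl).ge
  · rw [sum_eq_of_three hij hℓi hℓj q hrest, hqi, hqj, hqℓ]
    ring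
  · rw [sum_eq_of_three hij hℓi hℓj (fun k => q k ^ 2)
      fun m h1 h2 h3 => by simp [hrest m h1 h2 h3]]
    simp only [hqi, hqj, hqℓ]
    generalize Real.sqrt 33 = s at hs
    -- With `x = (9 - s) / 24` the left side is `x² (6 x² - 6 x + 1)`; reduce it modulo `s² = 33`.
    have h3 : s ^ 3 = 33 * s := by rw [pow_succ, hs]
    have h4 : s ^ 4 = 33 ^ 2 := by rw [← hs]; ring
    ring_nf
    rw [h4, h3, hs]
    ring
end

section
/- Define G(x) = x²(6x² − 6x + 1) for x ∈ [0, 1/2], and set x* = (9 − √33)/24. Then x* ∈ (0, 1/2), G attains its global maximum over [0, 1/2] at x*, and G(x*) = (11√33 − 59)/768; that is, for all x ∈ [0, 1/2], x²(6x² − 6x + 1) ≤ (11√33 − 59)/768, with equality at x = x*. -/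
/-!
The point `t = (9 - √33)/24` is a root of `12 t² - 9 t + 1`, the nontrivial factor of `G'`.
Hence `t` is a double root of `G x - G t`, and
`G x - G t = (x - t)² (6 x² + (12 t - 6) x + 18 t² - 12 t + 1)`.
The quadratic cofactor is convex in `x` and negative at both `0` and `1/2`, so it is negative on
`[0, 1/2]`. The value `G t` is the remainder of `G` modulo `12 t² - 9 t + 1`.
-/

/-- One-dimensional symmetric-regime optimization: with `G x = x²(6x² - 6x + 1)`
and `x* = (9 - √33)/24`, we have `x* ∈ (0, 1/2)`, `G` attains its global maximum
over `[0, 1/2]` at `x*`, and `G x* = (11√33 - 59)/768`. -/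
theorem symmetric_regime_max :
    ((9 - Real.sqrt 33) / 24) ∈ Set.Ioo (0:ℝ) (1/2) ∧
    (∀ x ∈ Set.Icc (0:ℝ) (1/2),
      x ^ 2 * (6 * x ^ 2 - 6 * x + 1)
        ≤ ((9 - Real.sqrt 33) / 24) ^ 2
            * (6 * ((9 - Real.sqrt 33) / 24) ^ 2 - 6 * ((9 - Real.sqrt 33) / 24) + 1)) ∧
    ((9 - Real.sqrt 33) / 24) ^ 2
        * (6 * ((9 - Real.sqrt 33) / 24) ^ 2 - 6 * ((9 - Real.sqrt 33) / 24) + 1)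
      = (11 * Real.sqrt 33 - 59) / 768 := by
  have hs : Real.sqrt 33 ^ 2 = 33 := Real.sq_sqrt (by norm_num)
  have hs5 : 5 < Real.sqrt 33 := Real.lt_sqrt_of_sq_lt (by norm_num)
  have hs6 : Real.sqrt 33 < 6 := (Real.sqrt_lt' (by norm_num)).2 (by norm_num)
  obtain ⟨t, ht⟩ : ∃ t, t = (9 - Real.sqrt 33) / 24 := ⟨_, rfl⟩
  have hsqrt : Real.sqrt 33 = 9 - 24 * t := by linarith
  rw [← ht]
  rw [hsqrt] at hs hs5 hs6 ⊢
  have h : 12 * t ^ 2 - 9 * t + 1 = 0 := by linear_combination hs / 48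
  refine ⟨⟨by linarith, by linarith⟩, ?_, ?_⟩
  · rintro x ⟨hx0, hx1⟩
    have hfac : x ^ 2 * (6 * x ^ 2 - 6 * x + 1) - t ^ 2 * (6 * t ^ 2 - 6 * t + 1)
        = (x - t) ^ 2 * (6 * x ^ 2 + (12 * t - 6) * x + (18 * t ^ 2 - 12 * t + 1)) := by
      linear_combination 2 * t * (x - t) * h
    -- Since `x² ≤ x / 2`, the cofactor is at most `(12 t - 3) x + (3 t - 1) / 2`,
    -- and both coefficients are negative because `t < 1/6`.
    have hq : 6 * x ^ 2 + (12 * t - 6) * x + (18 * t ^ 2 - 12 * t + 1) ≤ 0 := by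
      have h1 : 0 ≤ x * (1 / 2 - x) := mul_nonneg hx0 (by linarith)
      have h2 : 0 ≤ x * (3 - 12 * t) := mul_nonneg hx0 (by linarith)
      nlinarith
    linarith [mul_nonpos_of_nonneg_of_nonpos (sq_nonneg (x - t)) hq]
  -- The multiplier is the quotient of `6 t⁴ - 6 t³ + t²` by `12 t² - 9 t + 1`.
  · linear_combination (t ^ 2 / 2 - t / 8 - 5 / 96) * h
end
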